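/- Every subgroup G of PSL(2,ℝ) that is non-elementary and not discrete contains an elliptic element of infinite order; moreover such an element is conjugate in PSL(2,ℝ) to the class of a rotation matrix R(θ) = [[cos θ, sin θ], [−sin θ, cos θ]] with θ ∈ (0,π) and θ/π irrational. -/

import Mathlib

/-!
`PSL2R` is `PSL(2,ℝ) = SL(2,ℝ)/{±1}`, realized as the quotient of `SL(2,ℝ)` by its center.
-/

open Matrix Real

noncomputable section

/-- `SL(2,ℝ)`. -/
abbrev SL2R := Matrix.SpecialLinearGroup (Fin 2) ℝ

/-- The topology on `SL(2,ℝ)` induced from the space of matrices. -/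
instance : TopologicalSpace SL2R :=
  TopologicalSpace.induced (fun g => (g : Matrix (Fin 2) (Fin 2) ℝ)) inferInstance

/-- `PSL(2,ℝ) = SL(2,ℝ)/{±1}`, the quotient of `SL(2,ℝ)` by its center. -/
abbrev PSL2R := SL2R ⧸ Subgroup.center SL2R

/-- The rotation matrix `R(θ) = [[cos θ, sin θ], [-sin θ, cos θ]]`, as an element of `SL(2,ℝ)`. -/
def rotMat (θ : ℝ) : SL2R :=
  ⟨!![Real.cos θ, Real.sin θ; -Real.sin θ, Real.cos θ], by
    simp [Matrix.det_fin_two_of]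
    ring_nf
    nlinarith [Real.sin_sq_add_cos_sq θ]⟩

/-- The absolute value of the trace, well defined on `PSL(2,ℝ)`. -/
def absTrace (A : PSL2R) : ℝ :=
  |Matrix.trace ((Quotient.out A : SL2R) : Matrix (Fin 2) (Fin 2) ℝ)|

/-- An element of `PSL(2,ℝ)` is elliptic if `|tr| < 2`. -/
def IsElliptic (A : PSL2R) : Prop := absTrace A < 2

/-- The rotation number of an element of `PSL(2,ℝ)`, in `ℝ/2πℤ`: it is `2θ` if the
element is conjugate to the class of `R(θ)` with `θ ∈ (0,π)` (i.e. elliptic), and `0`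
otherwise (hyperbolic, parabolic, identity). -/
def rot (A : PSL2R) : AddCircle (2 * π) :=
  open Classical in
  if h : ∃ θ ∈ Set.Ioo (0:ℝ) π, IsConj (QuotientGroup.mk (rotMat θ) : PSL2R) A then
    ((2 * h.choose : ℝ) : AddCircle (2 * π))
  else 0

/-- A subgroup of `PSL(2,ℝ)` is discrete if it is a discrete subset of the
topological group `PSL(2,ℝ)`. -/
def IsDiscreteSubgroup (G : Subgroup PSL2R) : Prop := DiscreteTopology G

/-- The boundary circle `∂ℍ² = ℝ ∪ {∞}`, realized as the real projective line. -/
def Boundary := Projectivization ℝ (Fin 2 → ℝ)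

/-- An element of `SL(2,ℝ)`, viewed as an invertible matrix. -/
def slInvertible (g : SL2R) : Invertible (g : Matrix (Fin 2) (Fin 2) ℝ) :=
  haveI : Invertible (g : Matrix (Fin 2) (Fin 2) ℝ).det := by rw [g.prop]; exact invertibleOne
  Matrix.invertibleOfDetInvertible _

/-- The (Möbius) action of `SL(2,ℝ)` on the boundary circle `∂ℍ² = ℝP¹`. -/
def boundaryAct (g : SL2R) (p : Boundary) : Boundary :=
  Projectivization.map
    ((Matrix.toLinearEquiv' (g : Matrix (Fin 2) (Fin 2) ℝ) (slInvertible g)) :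
      (Fin 2 → ℝ) →ₗ[ℝ] (Fin 2 → ℝ))
    (Matrix.toLinearEquiv' (g : Matrix (Fin 2) (Fin 2) ℝ) (slInvertible g)).injective p

/-- A subgroup of `PSL(2,ℝ)` is elementary if it has a finite orbit in `ℍ² ∪ ∂ℍ²`:
either the orbit of some point of the hyperbolic plane `ℍ²` is finite, or the orbit of some
point of the boundary circle `∂ℍ²` is finite. (The action of a class in `PSL(2,ℝ)` is
computed via representatives in `SL(2,ℝ)`; the center acts trivially.) -/
def IsElementary (G : Subgroup PSL2R) : Prop :=
  (∃ z : UpperHalfPlane,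
    Set.Finite {w : UpperHalfPlane | ∃ g : SL2R, (QuotientGroup.mk g : PSL2R) ∈ G ∧ g • z = w}) ∨
  (∃ p : Boundary,
    Set.Finite {q : Boundary | ∃ g : SL2R, (QuotientGroup.mk g : PSL2R) ∈ G ∧ boundaryAct g p = q})

end


/-- The trace on `SL(2,ℝ)`. -/
def tr2 (g : SL2R) : ℝ := g 0 0 + g 1 1

lemma sl_mul (g h : SL2R) (i j : Fin 2) :
    (g * h) i j = g i 0 * h 0 j + g i 1 * h 1 j := by
  have := congrFun (congrFun (Matrix.SpecialLinearGroup.coe_mul g h) i) j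
  rw [Matrix.mul_apply, Fin.sum_univ_two] at this
  exact this

lemma sl_inv00 (g : SL2R) : (g⁻¹) 0 0 = g 1 1 := by
  have := congrFun (congrFun (Matrix.SpecialLinearGroup.coe_inv g) 0) 0
  rw [Matrix.adjugate_fin_two] at this
  exact this
lemma sl_inv01 (g : SL2R) : (g⁻¹) 0 1 = -g 0 1 := by
  have := congrFun (congrFun (Matrix.SpecialLinearGroup.coe_inv g) 0) 1
  rw [Matrix.adjugate_fin_two] at this
  exact this
lemma sl_inv10 (g : SL2R) : (g⁻¹) 1 0 = -g 1 0 := by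
  have := congrFun (congrFun (Matrix.SpecialLinearGroup.coe_inv g) 1) 0
  rw [Matrix.adjugate_fin_two] at this
  exact this
lemma sl_inv11 (g : SL2R) : (g⁻¹) 1 1 = g 0 0 := by
  have := congrFun (congrFun (Matrix.SpecialLinearGroup.coe_inv g) 1) 1
  rw [Matrix.adjugate_fin_two] at this
  exact this

lemma sl_det (g : SL2R) : g 0 0 * g 1 1 - g 0 1 * g 1 0 = 1 := by
  rw [← Matrix.det_fin_two]; exact g.2

lemma sl_ext {g h : SL2R} (h00 : g 0 0 = h 0 0) (h01 : g 0 1 = h 0 1)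
    (h10 : g 1 0 = h 1 0) (h11 : g 1 1 = h 1 1) : g = h := by
  ext i j
  fin_cases i <;> fin_cases j <;> assumption

lemma rot00 (θ : ℝ) : (rotMat θ) 0 0 = cos θ := rfl
lemma rot01 (θ : ℝ) : (rotMat θ) 0 1 = sin θ := rfl
lemma rot10 (θ : ℝ) : (rotMat θ) 1 0 = -sin θ := rfl
lemma rot11 (θ : ℝ) : (rotMat θ) 1 1 = cos θ := rfl

/-- Build an element of `SL(2,ℝ)` from its entries. -/
def mkSL (a b c d : ℝ) (h : a * d - b * c = 1) : SL2R :=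
  ⟨!![a, b; c, d], by rw [Matrix.det_fin_two_of]; exact h⟩
lemma mkSL00 (a b c d : ℝ) (h : a * d - b * c = 1) : mkSL a b c d h 0 0 = a := rfl
lemma mkSL01 (a b c d : ℝ) (h : a * d - b * c = 1) : mkSL a b c d h 0 1 = b := rfl
lemma mkSL10 (a b c d : ℝ) (h : a * d - b * c = 1) : mkSL a b c d h 1 0 = c := rfl
lemma mkSL11 (a b c d : ℝ) (h : a * d - b * c = 1) : mkSL a b c d h 1 1 = d := rfl

lemma sl_one00 : (1 : SL2R) 0 0 = 1 := rfl
lemma sl_one01 : (1 : SL2R) 0 1 = 0 := rfl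
lemma sl_one10 : (1 : SL2R) 1 0 = 0 := rfl
lemma sl_one11 : (1 : SL2R) 1 1 = 1 := rfl

lemma sl_neg (g : SL2R) (i j : Fin 2) : (-g) i j = - g i j := by
  rw [Matrix.SpecialLinearGroup.coe_neg]; rfl

lemma tr2_conj (k g : SL2R) : tr2 (k * g * k⁻¹) = tr2 g := by
  simp only [tr2, sl_mul, sl_inv00, sl_inv01, sl_inv10, sl_inv11]
  linear_combination (g 0 0 + g 1 1) * sl_det k

lemma tr2_neg (g : SL2R) : tr2 (-g) = - tr2 g := by
  simp only [tr2, sl_neg]; ring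

lemma tr2_inv (g : SL2R) : tr2 (g⁻¹) = tr2 g := by
  simp only [tr2, sl_inv00, sl_inv11]; ring

/-- Elements with `|tr| < 2` and positive upper right entry are conjugate to rotations. -/
lemma conj_rot_pos (E : SL2R) (h : |tr2 E| < 2) (hb : 0 < E 0 1) :
    ∃ θ ∈ Set.Ioo (0:ℝ) π, ∃ k : SL2R, E = k * rotMat θ * k⁻¹ := by
  have hd := sl_det E
  rw [abs_lt] at h
  obtain ⟨h1, h2⟩ := h
  set θ := arccos (tr2 E / 2) with hθ
  have hcos : cos θ = tr2 E / 2 := Real.cos_arccos (by linarith) (by linarith)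
  have hθ0 : 0 < θ := by rw [hθ, Real.arccos_pos]; linarith
  have hθπ : θ < π := by
    refine lt_of_le_of_ne (Real.arccos_le_pi _) ?_
    intro hh
    rw [hh, Real.cos_pi] at hcos; linarith
  have hs : 0 < sin θ := Real.sin_pos_of_pos_of_lt_pi hθ0 hθπ
  have hsc := Real.sin_sq_add_cos_sq θ
  have hc : E 1 0 < 0 := by
    by_contra hc
    push Not at hc
    have := mul_nonneg hb.le hc
    unfold tr2 at h1 h2
    nlinarith [sq_nonneg (E 0 0 - E 1 1)]
  set p := Real.sqrt (sin θ / (- E 1 0)) with hp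
  have hp2 : p ^ 2 * (- E 1 0) = sin θ := by
    rw [hp, Real.sq_sqrt (by apply div_nonneg <;> linarith)]
    exact div_mul_cancel₀ _ (by linarith)
  have hp0 : p ≠ 0 := by
    intro h0; rw [h0] at hp2; simp at hp2; linarith
  have hsn := hs.ne'
  have hcc : E 1 0 ≠ 0 := hc.ne
  have key : (mkSL p (p * (cos θ - E 0 0) / sin θ) 0 (1/p) (by field_simp; simp)) * rotMat θ
      = E * (mkSL p (p * (cos θ - E 0 0) / sin θ) 0 (1/p) (by field_simp; simp)) := by
    unfold tr2 at hcos
    have hd1 : E 1 1 = 2 * cos θ - E 0 0 := by linarith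
    rw [hd1] at hd
    apply sl_ext <;> simp only [sl_mul, rot00, rot01, rot10, rot11, mkSL00, mkSL01, mkSL10, mkSL11]
    · field_simp; ring
    · field_simp
      apply mul_right_cancel₀ hcc
      linear_combination (-((sin θ)^2 + (cos θ - E 0 0)^2)) * hp2 + sin θ * hd - sin θ * hsc
    · field_simp
      linear_combination hp2
    · rw [hd1]; field_simp
      linear_combination (cos θ - E 0 0) * hp2
  exact ⟨θ, ⟨hθ0, hθπ⟩, _, (eq_mul_inv_of_mul_eq key.symm)⟩


lemma conj_rot (E : SL2R) (h : |tr2 E| < 2) :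
    ∃ θ ∈ Set.Ioo (0:ℝ) π, ∃ k : SL2R, E = k * rotMat θ * k⁻¹ ∨ E = -(k * rotMat θ * k⁻¹) := by
  have hd := sl_det E
  rcases lt_trichotomy (E 0 1) 0 with hb | hb | hb
  · obtain ⟨θ, hθ, k, hk⟩ := conj_rot_pos (-E) (by rw [tr2_neg, abs_neg]; exact h)
      (by rw [sl_neg]; linarith)
    exact ⟨θ, hθ, k, Or.inr (by rw [← hk, neg_neg])⟩
  · exfalso
    rw [abs_lt] at h
    unfold tr2 at h
    rw [hb] at hd
    nlinarith [sq_nonneg (E 0 0 - E 1 1)]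
  · obtain ⟨θ, hθ, k, hk⟩ := conj_rot_pos E h hb
    exact ⟨θ, hθ, k, Or.inl hk⟩

/-- Commuting with a nontrivial rotation. -/
lemma comm_rot {θ : ℝ} (hs : sin θ ≠ 0) (g : SL2R) (h : g * rotMat θ = rotMat θ * g) :
    g 1 1 = g 0 0 ∧ g 1 0 = - g 0 1 := by
  have h00 := congrArg (fun m : SL2R => m 0 0) h
  have h01 := congrArg (fun m : SL2R => m 0 1) h
  simp only [sl_mul, rot00, rot01, rot10, rot11] at h00 h01
  constructor
  · apply mul_left_cancel₀ hs; linarith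
  · apply mul_left_cancel₀ hs; linarith

/-- `g` commutes with the rotation as soon as its entries have the right shape. -/
lemma comm_rot' {θ : ℝ} (g : SL2R) (h1 : g 1 1 = g 0 0) (h2 : g 1 0 = - g 0 1) :
    g * rotMat θ = rotMat θ * g := by
  apply sl_ext <;> simp only [sl_mul, rot00, rot01, rot10, rot11, h1, h2] <;> ring

lemma comm_neg_iff (g E : SL2R) : g * (-E) = (-E) * g ↔ g * E = E * g := by
  rw [mul_neg, neg_mul, neg_inj]

lemma comm_conj_iff (g k R : SL2R) :
    g * (k * R * k⁻¹) = (k * R * k⁻¹) * g ↔ (k⁻¹ * g * k) * R = R * (k⁻¹ * g * k) := by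
  constructor
  · intro h
    calc (k⁻¹ * g * k) * R = k⁻¹ * (g * (k * R * k⁻¹)) * k := by group
      _ = _ := by rw [h]; group
  · intro h
    calc g * (k * R * k⁻¹) = k * ((k⁻¹ * g * k) * R) * k⁻¹ := by group
      _ = _ := by rw [h]; group

/-- Normal form for reasoning about an elliptic element. -/
lemma ell_cases (E : SL2R) (h : |tr2 E| < 2) :
    ∃ θ : ℝ, 0 < sin θ ∧ ∃ k : SL2R,
      (∀ g, g * E = E * g ↔ (k⁻¹ * g * k) * rotMat θ = rotMat θ * (k⁻¹ * g * k)) ∧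
      (E = k * rotMat θ * k⁻¹ ∨ E = -(k * rotMat θ * k⁻¹)) := by
  obtain ⟨θ, hθ, k, hk⟩ := conj_rot E h
  refine ⟨θ, Real.sin_pos_of_pos_of_lt_pi hθ.1 hθ.2, k, ?_, hk⟩
  intro g
  rw [← comm_conj_iff]
  rcases hk with rfl | rfl
  · rfl
  · exact comm_neg_iff _ _

/-- The centralizer of an elliptic element is abelian. -/
lemma ell_centralizer (E : SL2R) (h : |tr2 E| < 2) (g g' : SL2R) (hg : g * E = E * g)
    (hg' : g' * E = E * g') : g * g' = g' * g := by
  obtain ⟨θ, hs, k, hc, -⟩ := ell_cases E h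
  obtain ⟨a1, a2⟩ := comm_rot hs.ne' _ ((hc g).1 hg)
  obtain ⟨b1, b2⟩ := comm_rot hs.ne' _ ((hc g').1 hg')
  have key : (k⁻¹ * g * k) * (k⁻¹ * g' * k) = (k⁻¹ * g' * k) * (k⁻¹ * g * k) := by
    generalize k⁻¹ * g * k = x at *
    generalize k⁻¹ * g' * k = y at *
    apply sl_ext <;> simp only [sl_mul, a1, a2, b1, b2] <;> ring
  calc g * g' = k * ((k⁻¹ * g * k) * (k⁻¹ * g' * k)) * k⁻¹ := by group
    _ = _ := by rw [key]; group

/-- Trace of the product of an elliptic element with its conjugate. -/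
lemma ell_trace_lt (E : SL2R) (h : |tr2 E| < 2) (g : SL2R) (hg : g * E ≠ E * g) :
    tr2 (E * (g * E * g⁻¹)) < tr2 E ^ 2 - 2 := by
  obtain ⟨θ, hs, k, hc, hE⟩ := ell_cases E h
  have hg' := (not_congr (hc g)).1 hg
  have h1 : tr2 (E * (g * E * g⁻¹)) =
      tr2 (rotMat θ * ((k⁻¹ * g * k) * rotMat θ * (k⁻¹ * g * k)⁻¹)) := by
    rw [← tr2_conj k⁻¹]
    rcases hE with rfl | rfl
    · congr 1; group
    · congr 1; simp only [mul_neg, neg_mul, neg_neg]; group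
  have h2 : tr2 E ^ 2 = (2 * cos θ) ^ 2 := by
    have : tr2 (rotMat θ) = 2 * cos θ := by simp only [tr2, rot00, rot11]; ring
    rcases hE with rfl | rfl
    · rw [tr2_conj, this]
    · rw [tr2_neg, tr2_conj, this]; ring
  rw [h1, h2]
  generalize k⁻¹ * g * k = x at *
  have hd := sl_det x
  have hne : 0 < (x 1 1 - x 0 0) ^ 2 + (x 1 0 + x 0 1) ^ 2 := by
    by_contra hcon
    push Not at hcon
    have e1 : x 1 1 - x 0 0 = 0 := by nlinarith [sq_nonneg (x 1 1 - x 0 0), sq_nonneg (x 1 0 + x 0 1)]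
    have e2 : x 1 0 + x 0 1 = 0 := by nlinarith [sq_nonneg (x 1 1 - x 0 0), sq_nonneg (x 1 0 + x 0 1)]
    exact hg' (comm_rot' x (by linarith) (by linarith))
  simp only [tr2, sl_mul, rot00, rot01, rot10, rot11, sl_inv00, sl_inv01, sl_inv10, sl_inv11]
  have hsc := Real.sin_sq_add_cos_sq θ
  have := mul_pos (pow_pos hs 2) hne
  linear_combination this + 2 * ((cos θ)^2 - (sin θ)^2 ) * hd - (2:ℝ) * hsc

/-- If an elliptic element commutes with its conjugate by `g`, it commutes with `g`. -/
lemma ell_comm_conj (E : SL2R) (h : |tr2 E| < 2) (g : SL2R)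
    (hg : (g * E * g⁻¹) * E = E * (g * E * g⁻¹)) : g * E = E * g := by
  obtain ⟨θ, hs, k, hc, hE⟩ := ell_cases E h
  rw [hc]
  rw [hc] at hg
  have h1 : ((k⁻¹ * g * k) * rotMat θ * (k⁻¹ * g * k)⁻¹) * rotMat θ =
      rotMat θ * ((k⁻¹ * g * k) * rotMat θ * (k⁻¹ * g * k)⁻¹) := by
    have e : (k⁻¹ * g * k) * rotMat θ * (k⁻¹ * g * k)⁻¹ = k⁻¹ * (g * (k * rotMat θ * k⁻¹) * g⁻¹) * k := by
      group
    rw [e]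
    rcases hE with rfl | rfl
    · exact hg
    · simp only [mul_neg, neg_mul, neg_inj] at hg
      exact hg
  generalize k⁻¹ * g * k = x at *
  obtain ⟨a1, a2⟩ := comm_rot hs.ne' _ h1
  have hd := sl_det x
  simp only [sl_mul, rot00, rot01, rot10, rot11, sl_inv00, sl_inv01, sl_inv10, sl_inv11] at a1 a2
  have e1 : x 0 0 * x 1 0 + x 0 1 * x 1 1 = 0 := by
    apply mul_left_cancel₀ hs.ne'; linarith
  have e2 : x 0 0 ^ 2 + x 0 1 ^ 2 = x 1 0 ^ 2 + x 1 1 ^ 2 := by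
    apply mul_left_cancel₀ hs.ne'; linarith
  have e3 : (x 0 0 ^ 2 + x 0 1 ^ 2) * (x 1 0 ^ 2 + x 1 1 ^ 2) = 1 := by
    linear_combination (x 0 0 * x 1 0 + x 0 1 * x 1 1) * e1 +
      (x 0 0 * x 1 1 - x 0 1 * x 1 0 + 1) * hd
  have e4 : x 0 0 ^ 2 + x 0 1 ^ 2 = 1 := by
    rw [← e2] at e3; nlinarith [sq_nonneg (x 0 0), sq_nonneg (x 0 1)]
  have e5 : (x 1 1 - x 0 0) ^ 2 + (x 1 0 + x 0 1) ^ 2 = 0 := by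
    linear_combination 2 * e4 - e2 - 2 * hd
  apply comm_rot'
  · nlinarith [sq_nonneg (x 1 1 - x 0 0), sq_nonneg (x 1 0 + x 0 1)]
  · nlinarith [sq_nonneg (x 1 1 - x 0 0), sq_nonneg (x 1 0 + x 0 1)]



/-- Lucas-type recursion computing traces of powers. -/
def lucasTr {R : Type*} [CommRing R] (t : R) : ℕ → R
  | 0 => 2
  | 1 => t
  | (n + 2) => t * lucasTr t (n + 1) - lucasTr t n

lemma lucasTr_map {R S : Type*} [CommRing R] [CommRing S] (f : R →+* S) (t : R) (n : ℕ) :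
    f (lucasTr t n) = lucasTr (f t) n := by
  induction n using Nat.twoStepInduction with
  | zero => exact map_ofNat f 2
  | one => simp [lucasTr]
  | more n h1 h2 => simp only [lucasTr, map_sub, map_mul, h1, h2]

lemma lucasTr_tr (g : SL2R) (n : ℕ) : lucasTr (tr2 g) n = tr2 (g ^ n) := by
  induction n using Nat.twoStepInduction with
  | zero => simp only [lucasTr, pow_zero, tr2, sl_one00, sl_one11]; norm_num
  | one => simp [lucasTr]
  | more n h1 h2 =>
    have hd := sl_det g
    simp only [lucasTr, h1, h2, pow_succ]
    generalize g ^ n = m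
    simp only [tr2, sl_mul]
    linear_combination (m 0 0 + m 1 1) * hd

lemma lucasTr_unit (u v : ℂ) (huv : u * v = 1) (n : ℕ) :
    lucasTr (u + v) n = u ^ n + v ^ n := by
  induction n using Nat.twoStepInduction with
  | zero => simp only [lucasTr, pow_zero]; norm_num
  | one => simp [lucasTr]
  | more n h1 h2 =>
    simp only [lucasTr, h1, h2]
    linear_combination (v ^ n + u ^ n) * huv

/-- A complex number with a Lucas value equal to `2` is a sum of two inverse roots of unity. -/
lemma lucasTr_root (t : ℂ) (n : ℕ) (h : lucasTr t n = 2) :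
    ∃ u v : ℂ, u * v = 1 ∧ u + v = t ∧ u ^ n = 1 ∧ v ^ n = 1 := by
  obtain ⟨w, hw⟩ := IsAlgClosed.exists_pow_nat_eq (t ^ 2 - 4) (n := 2) (by norm_num)
  have huv : (t + w) / 2 * ((t - w) / 2) = 1 := by linear_combination (-1/4) * hw
  have hs : (t + w) / 2 + (t - w) / 2 = t := by ring
  refine ⟨(t + w) / 2, (t - w) / 2, huv, hs, ?_⟩
  rw [← hs, lucasTr_unit _ _ huv] at h
  have hp : ((t + w) / 2) ^ n * ((t - w) / 2) ^ n = 1 := by rw [← mul_pow, huv, one_pow]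
  generalize ((t + w) / 2) ^ n = a at *
  generalize ((t - w) / 2) ^ n = b at *
  have : (a - 1) ^ 2 = 0 := by
    linear_combination a * h - hp
  have ha : a = 1 := by
    have := pow_eq_zero_iff (two_ne_zero) |>.1 this
    linear_combination this
  exact ⟨ha, by rw [ha] at hp; simpa using hp⟩

lemma lucasTr_bound (t : ℂ) (n : ℕ) (hn : 0 < n) (h : lucasTr t n = 2) : ‖t‖ ≤ 2 := by
  obtain ⟨u, v, -, rfl, hu, hv⟩ := lucasTr_root t n h
  have h1 := norm_add_le u v
  rw [Complex.norm_eq_one_of_pow_eq_one hu hn.ne', Complex.norm_eq_one_of_pow_eq_one hv hn.ne'] at h1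
  linarith

lemma lucasTr_integral (t : ℂ) (n : ℕ) (hn : 0 < n) (h : lucasTr t n = 2) : IsIntegral ℤ t := by
  obtain ⟨u, v, -, rfl, hu, hv⟩ := lucasTr_root t n h
  exact (IsIntegral.of_pow hn (by rw [hu]; exact isIntegral_one)).add
    (IsIntegral.of_pow hn (by rw [hv]; exact isIntegral_one))

lemma lucasTr_integral_real (t : ℝ) (n : ℕ) (hn : 0 < n) (h : lucasTr t n = 2) :
    IsIntegral ℤ t := by
  have h1 : lucasTr (t : ℂ) n = 2 := by
    have := lucasTr_map Complex.ofRealHom t n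
    rw [h] at this
    simpa using this.symm
  have h2 := lucasTr_integral _ n hn h1
  exact (isIntegral_algHom_iff (Complex.ofRealAm.restrictScalars ℤ)
    (fun a b hab => Complex.ofReal_injective hab)).1 h2

lemma finite_traces (K : IntermediateField ℚ ℝ) [NumberField K] :
    {t : ℝ | t ∈ K ∧ ∃ n > 0, lucasTr t n = 2}.Finite := by
  have := NumberField.Embeddings.finite_of_norm_le K ℂ 2
  refine (this.image (fun x : K => (x : ℝ))).subset ?_
  rintro t ⟨htK, n, hn, ht⟩
  refine ⟨⟨t, htK⟩, ⟨?_, ?_⟩, rfl⟩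
  · have h2 := lucasTr_integral_real t n hn ht
    exact (isIntegral_algHom_iff (K.val.restrictScalars ℤ)
      (fun a b hab => Subtype.ext hab)).1 h2
  · intro φ
    apply lucasTr_bound _ n hn
    have e : lucasTr (⟨t, htK⟩ : K) n = 2 := by
      apply Subtype.ext
      have := lucasTr_map (algebraMap K ℝ) ⟨t, htK⟩ n
      exact this.trans ht
    rw [← lucasTr_map, e]
    exact map_ofNat φ 2

section quat
variable (K : IntermediateField ℚ ℝ) (A B : Matrix (Fin 2) (Fin 2) ℝ)

/-- The `K`-span of `1, A, B, AB`. -/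
def QSpan (M : Matrix (Fin 2) (Fin 2) ℝ) : Prop :=
  ∃ p ∈ K, ∃ q ∈ K, ∃ r ∈ K, ∃ s ∈ K, M = p • (1 : Matrix (Fin 2) (Fin 2) ℝ) + q • A + r • B + s • (A * B)

lemma QSpan_mul (hA : A.det = 1) (hB : B.det = 1) (hx : A.trace ∈ K) (hy : B.trace ∈ K)
    (hz : (A * B).trace ∈ K) (M N : Matrix (Fin 2) (Fin 2) ℝ) (hM : QSpan K A B M)
    (hN : QSpan K A B N) : QSpan K A B (M * N) := by
  obtain ⟨p, hp, q, hq, r, hr, s, hs, rfl⟩ := hM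
  obtain ⟨p', hp', q', hq', r', hr', s', hs', rfl⟩ := hN
  have hAA : A * A = A.trace • A - 1 := by
    rw [Matrix.det_fin_two] at hA
    ext i j
    fin_cases i <;> fin_cases j <;>
      simp [Matrix.mul_apply, Fin.sum_univ_two, Matrix.trace_fin_two] <;> linarith
  have hBB : B * B = B.trace • B - 1 := by
    rw [Matrix.det_fin_two] at hB
    ext i j
    fin_cases i <;> fin_cases j <;>
      simp [Matrix.mul_apply, Fin.sum_univ_two, Matrix.trace_fin_two] <;> linarith
  have hBA : B * A = - (A * B) + A.trace • B + B.trace • A +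
      ((A * B).trace - A.trace * B.trace) • (1 : Matrix (Fin 2) (Fin 2) ℝ) := by
    ext i j
    fin_cases i <;> fin_cases j <;>
      simp [Matrix.mul_apply, Fin.sum_univ_two, Matrix.trace_fin_two] <;> ring
  generalize A.trace = x at *
  generalize B.trace = y at *
  generalize (A * B).trace = z at *
  have hAC : A * (A * B) = x • (A * B) - B := by
    rw [← mul_assoc, hAA, sub_mul, smul_mul_assoc, one_mul]
  have hCB : (A * B) * B = y • (A * B) - A := by
    rw [mul_assoc, hBB, mul_sub, mul_smul_comm, mul_one]
  have hBC : B * (A * B) = A - x • 1 + z • B := by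
    rw [← mul_assoc, hBA]
    simp only [add_mul, neg_mul, smul_mul_assoc, one_mul, hCB, hBB]
    module
  have hCA : (A * B) * A = B - y • 1 + z • A := by
    rw [mul_assoc, hBA]
    simp only [mul_add, mul_neg, mul_smul_comm, mul_one, hAC, hAA]
    module
  have hCC : (A * B) * (A * B) = z • (A * B) - 1 := by
    rw [← mul_assoc, hCA]
    simp only [add_mul, sub_mul, smul_mul_assoc, one_mul, hBB]
    module
  refine ⟨p*p' - q*q' - r*r' - s*s' + r*q'*(z-x*y) - x*r*s' - y*s*q', ?_,
    p*q'+q*p' + x*q*q' + y*r*q' + r*s' + z*s*q' - s*r', ?_,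
    p*r'+r*p' - q*s' + x*r*q' + y*r*r' + z*r*s' + s*q', ?_,
    p*s'+s*p' + q*r' + x*q*s' - r*q' + y*s*r' + z*s*s', ?_, ?_⟩
  · repeat' first | assumption | apply neg_mem | apply add_mem | apply sub_mem | apply mul_mem
  · repeat' first | assumption | apply neg_mem | apply add_mem | apply sub_mem | apply mul_mem
  · repeat' first | assumption | apply neg_mem | apply add_mem | apply sub_mem | apply mul_mem
  · repeat' first | assumption | apply neg_mem | apply add_mem | apply sub_mem | apply mul_mem
  simp only [add_mul, mul_add, smul_mul_assoc, mul_smul_comm, one_mul, mul_one, hAA, hBB, hBA, hAC,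
    hCB, hBC, hCA, hCC]
  module

lemma QSpan_trace (hx : A.trace ∈ K) (hy : B.trace ∈ K)
    (hz : (A * B).trace ∈ K) (M : Matrix (Fin 2) (Fin 2) ℝ) (hM : QSpan K A B M) :
    M.trace ∈ K := by
  obtain ⟨p, hp, q, hq, r, hr, s, hs, rfl⟩ := hM
  simp only [Matrix.trace_add, Matrix.trace_smul, smul_eq_mul]
  have h1 : (1 : Matrix (Fin 2) (Fin 2) ℝ).trace ∈ K := by
    rw [Matrix.trace_one]; exact natCast_mem K _
  exact add_mem (add_mem (add_mem (mul_mem hp h1) (mul_mem hq hx)) (mul_mem hr hy)) (mul_mem hs hz)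

lemma QSpan_left : QSpan K A B A :=
  ⟨0, zero_mem K, 1, one_mem K, 0, zero_mem K, 0, zero_mem K, by simp⟩

lemma QSpan_right : QSpan K A B B :=
  ⟨0, zero_mem K, 0, zero_mem K, 1, one_mem K, 0, zero_mem K, by simp⟩

lemma QSpan_adj (hx : A.trace ∈ K) (hy : B.trace ∈ K)
    (hz : (A * B).trace ∈ K) (M : Matrix (Fin 2) (Fin 2) ℝ) (hM : QSpan K A B M) :
    QSpan K A B M.adjugate := by
  have ht := QSpan_trace K A B hx hy hz M hM
  have h1 : M.adjugate = M.trace • 1 - M := by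
    rw [Matrix.adjugate_fin_two]
    ext i j
    fin_cases i <;> fin_cases j <;> simp [Matrix.trace_fin_two]
  rw [h1]
  generalize M.trace = t at *
  obtain ⟨p, hp, q, hq, r, hr, s, hs, rfl⟩ := hM
  exact ⟨t - p, sub_mem ht hp, -q, neg_mem hq, -r, neg_mem hr, -s, neg_mem hs, by module⟩
end quat


section zass
attribute [local instance] Matrix.linftyOpNormedRing

lemma inv_norm_bound {R : Type*} [NormedRing R] (h1 : ‖(1 : R)‖ ≤ 1) (a a' : R) (ha : a * a' = 1)
    (hn : ‖a - 1‖ ≤ 1/8) : ‖a'‖ ≤ 8/7 := by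
  have e : a' = 1 - (a - 1) * a' := by rw [sub_mul, ha]; simp
  have h2 : ‖a'‖ ≤ ‖(1 : R)‖ + ‖(a - 1) * a'‖ := by
    conv_lhs => rw [e]
    exact norm_sub_le _ _
  have h3 := norm_mul_le (a - 1) a'
  nlinarith [norm_nonneg a']

lemma comm_norm_bound {R : Type*} [NormedRing R] (h1 : ‖(1 : R)‖ ≤ 1) (a a' b b' : R)
    (ha : a * a' = 1) (hb : b * b' = 1)
    (hna : ‖a - 1‖ ≤ 1/8) (hnb : ‖b - 1‖ ≤ 1/8) :
    ‖a * b * a' * b' - 1‖ ≤ (1/2) * ‖b - 1‖ := by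
  have e : a * b * a' * b' - 1 = ((a - 1) * (b - 1) - (b - 1) * (a - 1)) * a' * b' := by
    have e1 : b * a * a' * b' = 1 := by rw [mul_assoc b, ha, mul_one, hb]
    have e2 : (a - 1) * (b - 1) - (b - 1) * (a - 1) = a * b - b * a := by noncomm_ring
    rw [e2, sub_mul, sub_mul, e1]
  rw [e]
  have ha' := inv_norm_bound h1 a a' ha hna
  have hb' := inv_norm_bound h1 b b' hb hnb
  have h2 : ‖(a - 1) * (b - 1) - (b - 1) * (a - 1)‖ ≤ 1/4 * ‖b - 1‖ := by
    have := norm_sub_le ((a - 1) * (b - 1)) ((b - 1) * (a - 1))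
    have h3 := norm_mul_le (a - 1) (b - 1)
    have h4 := norm_mul_le (b - 1) (a - 1)
    nlinarith [norm_nonneg (b - 1), norm_nonneg (a - 1)]
  calc ‖((a - 1) * (b - 1) - (b - 1) * (a - 1)) * a' * b'‖
      ≤ ‖(a - 1) * (b - 1) - (b - 1) * (a - 1)‖ * ‖a'‖ * ‖b'‖ := norm_mul₃_le
    _ ≤ (1/4 * ‖b - 1‖) * (8/7) * (8/7) := by gcongr
    _ ≤ _ := by nlinarith [norm_nonneg (b - 1)]

/-- The iterated commutator sequence. -/
def cseq (A B : SL2R) : ℕ → SL2R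
  | 0 => B
  | (n + 1) => A * cseq A B n * A⁻¹ * (cseq A B n)⁻¹

lemma mat_norm_one : ‖(1 : Matrix (Fin 2) (Fin 2) ℝ)‖ ≤ 1 := by
  rw [Matrix.linfty_opNorm_def]
  norm_cast
  apply Finset.sup_le
  intro i _
  rw [Fin.sum_univ_two]
  match i with
  | 0 => simp
  | 1 => simp

lemma mat_entry_le (M : Matrix (Fin 2) (Fin 2) ℝ) (i j : Fin 2) : |M i j| ≤ ‖M‖ := by
  rw [Matrix.linfty_opNorm_def]
  have h1 : (∑ j, ‖M i j‖₊) ≤ Finset.univ.sup fun i => ∑ j, ‖M i j‖₊ :=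
    Finset.le_sup (f := fun i => ∑ j, ‖M i j‖₊) (Finset.mem_univ i)
  have h2 : ‖M i j‖₊ ≤ ∑ j, ‖M i j‖₊ :=
    Finset.single_le_sum (f := fun j => ‖M i j‖₊) (fun _ _ => zero_le) (Finset.mem_univ j)
  exact_mod_cast h2.trans h1

lemma mat_norm_le (M : Matrix (Fin 2) (Fin 2) ℝ) (ε : ℝ) (h : ∀ i j, |M i j| ≤ ε) :
    ‖M‖ ≤ 2 * ε := by
  have h0 : 0 ≤ ε := (abs_nonneg _).trans (h 0 0)
  lift ε to NNReal using h0
  rw [Matrix.linfty_opNorm_def]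
  norm_cast
  apply Finset.sup_le
  intro i _
  rw [Fin.sum_univ_two, two_mul]
  exact add_le_add (h i 0) (h i 1)

/-- Underlying matrix. -/
def toM (g : SL2R) : Matrix (Fin 2) (Fin 2) ℝ := fun i j => g i j

lemma toM_mul (g h : SL2R) : toM (g * h) = toM g * toM h := by
  ext i j
  rw [Matrix.mul_apply, Fin.sum_univ_two]
  exact sl_mul g h i j

lemma toM_one : toM 1 = 1 := rfl

lemma toM_inv (g : SL2R) : toM g⁻¹ = (toM g).adjugate := by
  rw [Matrix.adjugate_fin_two]
  ext i j
  fin_cases i <;> fin_cases j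
  · exact sl_inv00 g
  · exact sl_inv01 g
  · exact sl_inv10 g
  · exact sl_inv11 g

lemma toM_mul_inv (g : SL2R) : toM g * toM g⁻¹ = 1 := by
  rw [← toM_mul, mul_inv_cancel, toM_one]

lemma toM_det (g : SL2R) : (toM g).det = 1 := by
  rw [Matrix.det_fin_two]; exact sl_det g

lemma toM_trace (g : SL2R) : (toM g).trace = tr2 g := by
  rw [Matrix.trace_fin_two]; rfl

lemma cseq_bound (A B : SL2R) (hA : ‖toM A - 1‖ ≤ 1/8) (hB : ‖toM B - 1‖ ≤ 1/8) (n : ℕ) :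
    ‖toM (cseq A B n) - 1‖ ≤ (1/2) ^ n * (1/8) := by
  induction n with
  | zero => simpa [cseq] using hB
  | succ n ih =>
    have h8 : ‖toM (cseq A B n) - 1‖ ≤ 1/8 := by
      refine ih.trans ?_
      have : ((1:ℝ)/2) ^ n ≤ 1 := pow_le_one₀ (by norm_num) (by norm_num)
      linarith
    have := comm_norm_bound mat_norm_one (toM A) (toM A⁻¹) (toM (cseq A B n))
      (toM (cseq A B n)⁻¹) (toM_mul_inv _) (toM_mul_inv _) hA h8
    simp only [cseq, toM_mul]
    rw [pow_succ]
    linarith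

lemma near_norm (g : SL2R) (h : ∀ i j, |g i j - (1 : SL2R) i j| < 1/16) : ‖toM g - 1‖ ≤ 1/8 := by
  have := mat_norm_le (toM g - 1) (1/16) (fun i j => (h i j).le)
  linarith

lemma cseq_entry (A B : SL2R) (hA : ∀ i j, |A i j - (1 : SL2R) i j| < 1/16)
    (hB : ∀ i j, |B i j - (1 : SL2R) i j| < 1/16) (i j : Fin 2) :
    Filter.Tendsto (fun n => cseq A B n i j) Filter.atTop (nhds ((1 : SL2R) i j)) := by
  rw [tendsto_iff_norm_sub_tendsto_zero]
  refine squeeze_zero (fun _ => norm_nonneg _) (g := fun n : ℕ => ((1:ℝ)/2) ^ n * (1/8)) ?_ ?_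
  · intro n
    exact (mat_entry_le (toM (cseq A B n) - 1) i j).trans (cseq_bound A B (near_norm A hA) (near_norm B hB) n)
  · have := (tendsto_pow_atTop_nhds_zero_of_lt_one (r := (1:ℝ)/2) (by norm_num) (by norm_num)).mul_const (1/8)
    simpa using this

end zass

lemma tr_tendsto {ι : Type*} {l : Filter ι} (A : SL2R) (b : ι → SL2R)
    (hb : ∀ i j, Filter.Tendsto (fun n => b n i j) l (nhds ((1 : SL2R) i j))) :
    Filter.Tendsto (fun n => tr2 (A * (b n * A * (b n)⁻¹))) l (nhds (tr2 A ^ 2 - 2)) := by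
  have hd := sl_det A
  simp only [tr2, sl_mul, sl_inv00, sl_inv01, sl_inv10, sl_inv11]
  have F : Continuous (fun p : ℝ × ℝ × ℝ × ℝ =>
    A 0 0 * ((p.1 * A 0 0 + p.2.1 * A 1 0) * p.2.2.2 + (p.1 * A 0 1 + p.2.1 * A 1 1) * -p.2.2.1) +
    A 0 1 * ((p.2.2.1 * A 0 0 + p.2.2.2 * A 1 0) * p.2.2.2 + (p.2.2.1 * A 0 1 + p.2.2.2 * A 1 1) * -p.2.2.1) +
    (A 1 0 * ((p.1 * A 0 0 + p.2.1 * A 1 0) * -p.2.1 + (p.1 * A 0 1 + p.2.1 * A 1 1) * p.1) +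
    A 1 1 * ((p.2.2.1 * A 0 0 + p.2.2.2 * A 1 0) * -p.2.1 + (p.2.2.1 * A 0 1 + p.2.2.2 * A 1 1) * p.1))) := by
    fun_prop
  have T := (hb 0 0).prodMk_nhds ((hb 0 1).prodMk_nhds ((hb 1 0).prodMk_nhds (hb 1 1)))
  have := (F.tendsto _).comp T
  simp only [sl_one00, sl_one01, sl_one10, sl_one11] at this
  convert this using 2
  · simp only [Function.comp]
  · linear_combination (2 : ℝ) * hd

lemma cseq_mem (Γ : Subgroup SL2R) (A B : SL2R) (hA : A ∈ Γ) (hB : B ∈ Γ) (n : ℕ) :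
    cseq A B n ∈ Γ := by
  induction n with
  | zero => exact hB
  | succ n ih => exact Γ.mul_mem (Γ.mul_mem (Γ.mul_mem hA ih) (Γ.inv_mem hA)) (Γ.inv_mem ih)

lemma cseq_comm (A B : SL2R) (hA : |tr2 A| < 2) (hB : B * A ≠ A * B) (n : ℕ) :
    cseq A B n * A ≠ A * cseq A B n := by
  induction n with
  | zero => exact hB
  | succ n ih =>
    intro h
    apply ih
    apply ell_comm_conj A hA
    simp only [cseq] at h
    generalize cseq A B n = b at *
    have h1 : b * A⁻¹ * b⁻¹ * A = A * (b * A⁻¹ * b⁻¹) := by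
      calc b * A⁻¹ * b⁻¹ * A = A⁻¹ * (A * b * A⁻¹ * b⁻¹ * A) := by group
        _ = _ := by rw [h]; group
    have h2 : (b * A * b⁻¹)⁻¹ = b * A⁻¹ * b⁻¹ := by group
    rw [← h2] at h1
    have h3 : Commute (b * A * b⁻¹)⁻¹ A := h1
    exact (Commute.inv_left_iff.1 h3)

lemma cseq_span (K : IntermediateField ℚ ℝ) (A B : SL2R) (hx : tr2 A ∈ K) (hy : tr2 B ∈ K)
    (hz : tr2 (A * B) ∈ K) (n : ℕ) : QSpan K (toM A) (toM B) (toM (cseq A B n)) := by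
  rw [← toM_trace] at hx hy hz
  rw [toM_mul] at hz
  have mul := QSpan_mul K (toM A) (toM B) (toM_det A) (toM_det B) hx hy hz
  have adj := QSpan_adj K (toM A) (toM B) hx hy hz
  induction n with
  | zero => exact QSpan_right _ _ _
  | succ n ih =>
    simp only [cseq, toM_mul, toM_inv]
    exact mul _ _ (mul _ _ (mul _ _ (QSpan_left _ _ _) ih) (adj _ (QSpan_left _ _ _))) (adj _ ih)

lemma cseq_trace_mem (K : IntermediateField ℚ ℝ) (A B : SL2R) (hx : tr2 A ∈ K) (hy : tr2 B ∈ K)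
    (hz : tr2 (A * B) ∈ K) (n : ℕ) : tr2 (A * (cseq A B n * A * (cseq A B n)⁻¹)) ∈ K := by
  have ih := cseq_span K A B hx hy hz n
  rw [← toM_trace] at hx hy hz
  rw [toM_mul] at hz
  have mul := QSpan_mul K (toM A) (toM B) (toM_det A) (toM_det B) hx hy hz
  have adj := QSpan_adj K (toM A) (toM B) hx hy hz
  rw [← toM_trace]
  apply QSpan_trace K (toM A) (toM B) hx hy hz
  simp only [toM_mul, toM_inv]
  exact mul _ _ (QSpan_left _ _ _) (mul _ _ (mul _ _ ih (QSpan_left _ _ _)) (adj _ ih))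

/-- The core contradiction. -/
lemma main_contra (Γ : Subgroup SL2R)
    (hfin : ∀ g ∈ Γ, |tr2 g| < 2 → ∃ n > 0, lucasTr (tr2 g) n = 2)
    (A h : SL2R) (hAΓ : A ∈ Γ) (hhΓ : h ∈ Γ) (hA : |tr2 A| < 2) (hA0 : 0 < tr2 A)
    (hcomm : h * A ≠ A * h) (hA8 : ∀ i j, |A i j - (1 : SL2R) i j| < 1/16)
    (hB8 : ∀ i j, |(h * A * h⁻¹) i j - (1 : SL2R) i j| < 1/16)
    (hlow : -2 < tr2 (A * (h * A * h⁻¹))) : False := by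
  set B := h * A * h⁻¹ with hB
  have hBΓ : B ∈ Γ := Γ.mul_mem (Γ.mul_mem hhΓ hAΓ) (Γ.inv_mem hhΓ)
  have hABcomm : B * A ≠ A * B := fun hh => hcomm (ell_comm_conj A hA h hh)
  have hL : tr2 A ^ 2 - 2 < 2 := by
    have := (sq_lt_sq' (abs_lt.1 hA).1 (abs_lt.1 hA).2); linarith
  have hAB : |tr2 (A * B)| < 2 := by
    rw [abs_lt]
    exact ⟨hlow, (ell_trace_lt A hA h hcomm).trans hL⟩
  obtain ⟨n1, hn1, e1⟩ := hfin A hAΓ hA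
  obtain ⟨n2, hn2, e2⟩ := hfin (A * B) (Γ.mul_mem hAΓ hBΓ) hAB
  have i1 : IsIntegral ℚ (tr2 A) := (lucasTr_integral_real _ n1 hn1 e1).tower_top
  have i2 : IsIntegral ℚ (tr2 (A * B)) := (lucasTr_integral_real _ n2 hn2 e2).tower_top
  let K : IntermediateField ℚ ℝ := IntermediateField.adjoin ℚ {tr2 A, tr2 (A * B)}
  haveI : FiniteDimensional ℚ K := by
    apply IntermediateField.finiteDimensional_adjoin
    intro x hx
    rcases hx with rfl | rfl
    · exact i1
    · exact i2
  haveI : NumberField K := ⟨⟩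
  have hx : tr2 A ∈ K := IntermediateField.subset_adjoin _ _ (by simp)
  have hy : tr2 B ∈ K := by rw [hB, tr2_conj]; exact hx
  have hz : tr2 (A * B) ∈ K := IntermediateField.subset_adjoin _ _ (by simp)
  have hT := tr_tendsto A (cseq A B) (cseq_entry A B hA8 hB8)
  have hlt : ∀ n, tr2 (A * (cseq A B n * A * (cseq A B n)⁻¹)) < tr2 A ^ 2 - 2 := fun n =>
    ell_trace_lt A hA _ (cseq_comm A B hA hABcomm n)
  have hev : ∀ᶠ n in Filter.atTop, -2 < tr2 (A * (cseq A B n * A * (cseq A B n)⁻¹)) := by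
    apply hT.eventually_const_lt
    nlinarith
  set T := {t : ℝ | t ∈ K ∧ ∃ n > 0, lucasTr t n = 2} ∩ Set.Iio (tr2 A ^ 2 - 2) with hTdef
  have hTc : IsClosed T := ((finite_traces K).inter_of_left _).isClosed
  have hmem : ∀ᶠ n in Filter.atTop, tr2 (A * (cseq A B n * A * (cseq A B n)⁻¹)) ∈ T := by
    filter_upwards [hev] with n hn
    have hc := cseq_mem Γ A B hAΓ hBΓ n
    refine ⟨⟨cseq_trace_mem K A B hx hy hz n, hfin _ ?_ ?_⟩, hlt n⟩
    · exact Γ.mul_mem hAΓ (Γ.mul_mem (Γ.mul_mem hc hAΓ) (Γ.inv_mem hc))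
    · rw [abs_lt]; exact ⟨hn, (hlt n).trans hL⟩
  have := hTc.mem_of_tendsto hT hmem
  exact lt_irrefl _ (Set.mem_Iio.1 this.2)


/-- Entrywise convergence in `SL(2,ℝ)`. -/
def ETends {ι : Type*} (l : Filter ι) (b : ι → SL2R) (g : SL2R) : Prop :=
  ∀ i j, Filter.Tendsto (fun n => b n i j) l (nhds (g i j))

lemma ETends.mul {ι : Type*} {l : Filter ι} {b c : ι → SL2R} {g h : SL2R}
    (hb : ETends l b g) (hc : ETends l c h) : ETends l (fun n => b n * c n) (g * h) := by
  intro i j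
  simp only [sl_mul]
  exact ((hb i 0).mul (hc 0 j)).add ((hb i 1).mul (hc 1 j))

lemma ETends.inv {ι : Type*} {l : Filter ι} {b : ι → SL2R} {g : SL2R}
    (hb : ETends l b g) : ETends l (fun n => (b n)⁻¹) g⁻¹ := by
  intro i j
  match i, j with
  | 0, 0 => simp only [sl_inv00]; exact hb 1 1
  | 0, 1 => simp only [sl_inv01]; exact (hb 0 1).neg
  | 1, 0 => simp only [sl_inv10]; exact (hb 1 0).neg
  | 1, 1 => simp only [sl_inv11]; exact hb 0 0

lemma ETends.const {ι : Type*} {l : Filter ι} (g : SL2R) : ETends l (fun _ => g) g :=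
  fun _ _ => tendsto_const_nhds

lemma ETends.tr {ι : Type*} {l : Filter ι} {b : ι → SL2R} {g : SL2R}
    (hb : ETends l b g) : Filter.Tendsto (fun n => tr2 (b n)) l (nhds (tr2 g)) :=
  (hb 0 0).add (hb 1 1)

lemma ETends.near {ι : Type*} {l : Filter ι} {b : ι → SL2R}
    (hb : ETends l b 1) {ε : ℝ} (hε : 0 < ε) :
    ∀ᶠ n in l, ∀ i j, |b n i j - (1 : SL2R) i j| < ε := by
  rw [Filter.eventually_all]
  intro i
  rw [Filter.eventually_all]
  intro j
  exact (hb i j).eventually (Metric.ball_mem_nhds _ hε)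

lemma ETends.conj {ι : Type*} {l : Filter ι} {b : ι → SL2R}
    (hb : ETends l b 1) (h : SL2R) : ETends l (fun n => h * b n * h⁻¹) 1 := by
  have := ((ETends.const h).mul hb).mul (ETends.const h⁻¹)
  simpa using this

lemma tr2_one : tr2 1 = 2 := by
  simp only [tr2, sl_one00, sl_one11]; norm_num

/-- The resultant-like quantity. -/
def DD (x y z : ℝ) (h : SL2R) : ℝ :=
  (x * (h 0 0 - h 1 1) + y * h 1 0 + z * h 0 1) ^ 2 - (x ^ 2 + y * z) * (tr2 h ^ 2 - 4)

lemma tr_pair (g h : SL2R) :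
    tr2 (g * (h * g * h⁻¹)) - 2 =
      4 * (((g 0 0 - g 1 1) / 2) ^ 2 + g 0 1 * g 1 0) - DD ((g 0 0 - g 1 1) / 2) (g 0 1) (g 1 0) h := by
  have hd := sl_det g
  have hh := sl_det h
  simp only [DD, tr2, sl_mul, sl_inv00, sl_inv01, sl_inv10, sl_inv11]
  generalize g 0 0 = a at *
  generalize g 0 1 = b at *
  generalize g 1 0 = c at *
  generalize g 1 1 = d at *
  generalize h 0 0 = p at *
  generalize h 0 1 = q at *
  generalize h 1 0 = r at *
  generalize h 1 1 = s at *
  grind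

lemma tr_pair' (g h : SL2R) :
    tr2 (g * (h * g⁻¹ * h⁻¹)) - 2 = DD ((g 0 0 - g 1 1) / 2) (g 0 1) (g 1 0) h := by
  have hd := sl_det g
  have hh := sl_det h
  simp only [DD, tr2, sl_mul, sl_inv00, sl_inv01, sl_inv10, sl_inv11]
  generalize g 0 0 = a at *
  generalize g 0 1 = b at *
  generalize g 1 0 = c at *
  generalize g 1 1 = d at *
  generalize h 0 0 = p at *
  generalize h 0 1 = q at *
  generalize h 1 0 = r at *
  generalize h 1 1 = s at *
  grind

lemma DD_smul (c x y z : ℝ) (h : SL2R) : DD (c * x) (c * y) (c * z) h = c ^ 2 * DD x y z h := by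
  simp only [DD]; ring

lemma DD_sq (x y z : ℝ) (h : SL2R) : DD x y z (h * h) = tr2 h ^ 2 * DD x y z h := by
  have hh := sl_det h
  simp only [DD, tr2, sl_mul]
  generalize h 0 0 = p at *
  generalize h 0 1 = q at *
  generalize h 1 0 = r at *
  generalize h 1 1 = s at *
  grind

lemma tr2_sq (h : SL2R) : tr2 (h * h) = tr2 h ^ 2 - 2 := by
  have hh := sl_det h
  simp only [tr2, sl_mul]
  linear_combination (-2 : ℝ) * hh

lemma limit_dir (Γ : Subgroup SL2R) (g : ℕ → SL2R) (hgΓ : ∀ n, g n ∈ Γ)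
    (hg1 : ∀ n, g n ≠ 1 ∧ g n ≠ -1) (hg : ETends Filter.atTop g 1) (ε : ℝ) (hε : 0 < ε)
    (hne : ∀ g ∈ Γ, (∀ i j, |g i j - (1 : SL2R) i j| < ε) → 2 ≤ |tr2 g|) :
    ∃ v : Fin 3 → ℝ, v ≠ 0 ∧ ∀ h ∈ Γ, 0 ≤ DD (v 0) (v 1) (v 2) h ∧
      DD (v 0) (v 1) (v 2) h ≤ 4 * ((v 0) ^ 2 + v 1 * v 2) := by
  let w : ℕ → Fin 3 → ℝ := fun n => ![(g n 0 0 - g n 1 1) / 2, g n 0 1, g n 1 0]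
  have hw : ∀ n, w n ≠ 0 := by
    intro n h0
    have a0 : (g n 0 0 - g n 1 1) / 2 = 0 := congrFun h0 0
    have a1 : g n 0 1 = 0 := congrFun h0 1
    have a2 : g n 1 0 = 0 := congrFun h0 2
    have hd := sl_det (g n)
    have a3 : g n 1 1 = g n 0 0 := by linarith
    rw [a1, a3] at hd
    have : (g n 0 0 - 1) * (g n 0 0 + 1) = 0 := by linarith
    rcases mul_eq_zero.1 this with h | h
    · apply (hg1 n).1
      apply sl_ext
      · rw [sl_one00]; linarith
      · rw [sl_one01, a1]
      · rw [sl_one10, a2]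
      · rw [sl_one11]; linarith
    · apply (hg1 n).2
      apply sl_ext
      · rw [sl_neg, sl_one00]; linarith
      · rw [sl_neg, sl_one01, a1, neg_zero]
      · rw [sl_neg, sl_one10, a2, neg_zero]
      · rw [sl_neg, sl_one11]; linarith
  let u : ℕ → Fin 3 → ℝ := fun n => ‖w n‖⁻¹ • w n
  have hu : ∀ n, u n ∈ Metric.sphere (0 : Fin 3 → ℝ) 1 := by
    intro n
    rw [mem_sphere_zero_iff_norm, norm_smul, norm_inv, norm_norm]
    exact inv_mul_cancel₀ (norm_ne_zero_iff.2 (hw n))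
  obtain ⟨v, hv, φ, hφ, hlim⟩ := (isCompact_sphere (0 : Fin 3 → ℝ) 1).tendsto_subseq hu
  have hl : ∀ i, Filter.Tendsto (fun n => u (φ n) i) Filter.atTop (nhds (v i)) :=
    fun i => (tendsto_pi_nhds.1 hlim) i
  refine ⟨v, ?_, ?_⟩
  · intro h0
    rw [h0] at hv
    simp at hv
  intro h hh
  have t1 : ETends Filter.atTop (fun n => g n * (h * g n * h⁻¹)) 1 := by
    simpa using hg.mul (hg.conj h)
  have t2 : ETends Filter.atTop (fun n => g n * (h * (g n)⁻¹ * h⁻¹)) 1 := by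
    have hi : ETends Filter.atTop (fun n => (g n)⁻¹) 1 := by simpa using hg.inv
    simpa using hg.mul (hi.conj h)
  have key : ∀ᶠ n in Filter.atTop, 0 ≤ DD (u n 0) (u n 1) (u n 2) h ∧
      DD (u n 0) (u n 1) (u n 2) h ≤ 4 * ((u n 0) ^ 2 + u n 1 * u n 2) := by
    have p1 := t1.tr.eventually_const_lt (u := 0) (by rw [tr2_one]; norm_num)
    have p2 := t2.tr.eventually_const_lt (u := 0) (by rw [tr2_one]; norm_num)
    filter_upwards [p1, p2, t1.near hε, t2.near hε] with n h1 h2 h3 h4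
    have q1 := hne _ (Γ.mul_mem (hgΓ n) (Γ.mul_mem (Γ.mul_mem hh (hgΓ n)) (Γ.inv_mem hh))) h3
    have q2 := hne _ (Γ.mul_mem (hgΓ n) (Γ.mul_mem (Γ.mul_mem hh (Γ.inv_mem (hgΓ n)))
      (Γ.inv_mem hh))) h4
    rw [abs_of_pos h1] at q1
    rw [abs_of_pos h2] at q2
    have e1 := tr_pair (g n) h
    have e2 := tr_pair' (g n) h
    set c := ‖w n‖⁻¹ with hc
    have u0 : u n 0 = c * ((g n 0 0 - g n 1 1) / 2) := rfl
    have u1 : u n 1 = c * g n 0 1 := rfl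
    have u2 : u n 2 = c * g n 1 0 := rfl
    rw [u0, u1, u2, DD_smul]
    constructor
    · apply mul_nonneg (sq_nonneg c); linarith
    · have : DD ((g n 0 0 - g n 1 1) / 2) (g n 0 1) (g n 1 0) h ≤
        4 * (((g n 0 0 - g n 1 1) / 2) ^ 2 + g n 0 1 * g n 1 0) := by linarith
      nlinarith [mul_le_mul_of_nonneg_left this (sq_nonneg c)]
  have key' := hφ.tendsto_atTop.eventually key
  have lD : Filter.Tendsto (fun n => DD (u (φ n) 0) (u (φ n) 1) (u (φ n) 2) h) Filter.atTop
      (nhds (DD (v 0) (v 1) (v 2) h)) := by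
    unfold DD
    exact (((((hl 0).mul_const _).add ((hl 1).mul_const _)).add ((hl 2).mul_const _)).pow 2).sub
      ((((hl 0).pow 2).add ((hl 1).mul (hl 2))).mul_const _)
  have lq := (((hl 0).pow 2).add ((hl 1).mul (hl 2))).const_mul 4
  exact ⟨ge_of_tendsto lD (key'.mono fun n hn => hn.1),
    le_of_tendsto_of_tendsto lD lq (key'.mono fun n hn => hn.2)⟩

lemma DD_zero (Γ : Subgroup SL2R) (x y z C : ℝ)
    (hD : ∀ h ∈ Γ, 0 ≤ DD x y z h ∧ DD x y z h ≤ C) (k : SL2R) (hk : k ∈ Γ) (ht : 2 ≤ |tr2 k|) :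
    DD x y z k = 0 := by
  have key : ∀ n : ℕ, ∀ k ∈ Γ, 2 ≤ |tr2 k| → 4 ^ n * DD x y z k ≤ C := by
    intro n
    induction n with
    | zero => intro k hk _; simpa using (hD k hk).2
    | succ n ih =>
      intro k hk ht
      have h4 : 4 ≤ tr2 k ^ 2 := by
        rw [← sq_abs]; nlinarith
      have h2 := ih (k * k) (Γ.mul_mem hk hk) (by
        rw [tr2_sq]
        exact le_trans (by linarith) (le_abs_self _))
      rw [DD_sq] at h2
      have h0 := (hD k hk).1
      have := mul_le_mul_of_nonneg_right h4 h0
      have := mul_le_mul_of_nonneg_left this (show (0:ℝ) ≤ 4 ^ n by positivity)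
      rw [pow_succ]
      linarith
  by_contra hne
  have hpos : 0 < DD x y z k := lt_of_le_of_ne (hD k hk).1 (Ne.symm hne)
  obtain ⟨n, hn⟩ := pow_unbounded_of_one_lt (C / DD x y z k) (show (1:ℝ) < 4 by norm_num)
  rw [div_lt_iff₀ hpos] at hn
  linarith [key n k hk ht]

/-- The fixed point form of `k`. -/
def KF (k : SL2R) (u w : ℝ) : ℝ := k 1 0 * u ^ 2 + (k 1 1 - k 0 0) * u * w - k 0 1 * w ^ 2

lemma KF_factor (x y z : ℝ) (hq : 0 ≤ x ^ 2 + y * z) (h0 : ¬ (x = 0 ∧ y = 0 ∧ z = 0)) :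
    ∃ v1 v2 : Fin 2 → ℝ, v1 ≠ 0 ∧ v2 ≠ 0 ∧ ∃ c : ℝ,
      ∀ k, KF k (v1 0) (v1 1) * KF k (v2 0) (v2 1) = c * DD x y z k := by
  by_cases hz : z = 0
  · subst hz
    refine ⟨![1, 0], ![y, -2 * x], ?_, ?_, 1, ?_⟩
    · intro h; have := congrFun h 0; simp at this
    · intro h
      have h1 := congrFun h 0
      have h2 := congrFun h 1
      simp at h1 h2
      exact h0 ⟨h2, h1, rfl⟩
    · intro k
      have hd := sl_det k
      simp [KF, DD, tr2]
      linear_combination (4 * x ^ 2) * hd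
  · set e := Real.sqrt (x ^ 2 + y * z) with he
    have hee : e ^ 2 = x ^ 2 + y * z := Real.sq_sqrt hq
    refine ⟨![x + e, z], ![x - e, z], ?_, ?_, z ^ 2, ?_⟩
    · intro h; exact hz (congrFun h 1)
    · intro h; exact hz (congrFun h 1)
    · intro k
      have hd := sl_det k
      simp only [KF, DD, tr2, Matrix.cons_val_zero, Matrix.cons_val_one]
      generalize k 0 0 = a at *
      generalize k 0 1 = b at *
      generalize k 1 0 = c at *
      generalize k 1 1 = d at *
      grind


open scoped Pointwise in
lemma neumann_orbit {G α : Type*} [Group G] [MulAction G α] (p : Bool → α) (F : Set α)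
    (hF : F.Finite) (h : ∀ g : G, ∃ b, g • p b ∈ F) :
    ∃ b, (MulAction.orbit G (p b)).Finite := by
  classical
  let c : α × Bool → G := fun x => if hx : ∃ g : G, g • p x.2 = x.1 then hx.choose else 1
  have hc : ∀ x : α × Bool, (∃ g : G, g • p x.2 = x.1) → c x • p x.2 = x.1 := by
    intro x hx
    simp only [c, dif_pos hx]
    exact hx.choose_spec
  have hcov : ⋃ i ∈ hF.toFinset ×ˢ (Finset.univ : Finset Bool),
      (c i) • (MulAction.stabilizer G (p i.2) : Set G) = Set.univ := by
    rw [Set.eq_univ_iff_forall]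
    intro g
    obtain ⟨b, hb⟩ := h g
    simp only [Set.mem_iUnion]
    refine ⟨(g • p b, b), ?_, ?_⟩
    · simp [hb]
    · rw [mem_leftCoset_iff, SetLike.mem_coe, MulAction.mem_stabilizer_iff, mul_smul,
        inv_smul_eq_iff]
      exact (hc (g • p b, b) ⟨g, rfl⟩).symm
  obtain ⟨i, _, hi⟩ := Subgroup.exists_finiteIndex_of_leftCoset_cover hcov
  refine ⟨i.2, ?_⟩
  have : Finite (G ⧸ MulAction.stabilizer G (p i.2)) := Subgroup.finite_quotient_of_finiteIndex
  have h2 : Finite (MulAction.orbit G (p i.2)) :=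
    Finite.of_equiv _ (MulAction.orbitEquivQuotientStabilizer G (p i.2)).symm
  exact Set.toFinite _

lemma bd_mk (g : SL2R) (v : Fin 2 → ℝ) (hv : v ≠ 0) :
    ∃ hv', boundaryAct g (Projectivization.mk ℝ v hv) =
      Projectivization.mk ℝ (![g 0 0 * v 0 + g 0 1 * v 1, g 1 0 * v 0 + g 1 1 * v 1]) hv' := by
  have e : ∀ v, (Matrix.toLinearEquiv' (g : Matrix (Fin 2) (Fin 2) ℝ) (slInvertible g)) v =
      ![g 0 0 * v 0 + g 0 1 * v 1, g 1 0 * v 0 + g 1 1 * v 1] := by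
    intro v
    ext i
    have : (Matrix.toLinearEquiv' (g : Matrix (Fin 2) (Fin 2) ℝ) (slInvertible g)) v =
      (g : Matrix (Fin 2) (Fin 2) ℝ) *ᵥ v := rfl
    rw [this, Matrix.mulVec, dotProduct, Fin.sum_univ_two]
    match i with
    | 0 => rfl
    | 1 => rfl
  have hv' : ![g 0 0 * v 0 + g 0 1 * v 1, g 1 0 * v 0 + g 1 1 * v 1] ≠ 0 := by
    rw [← e, Ne, LinearEquiv.map_eq_zero_iff]; exact hv
  refine ⟨hv', ?_⟩
  unfold boundaryAct
  rw [Projectivization.map_mk]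
  congr 1
  exact e v

lemma bd_smul (g : SL2R) (p : Projectivization ℝ (Fin 2 → ℝ)) : boundaryAct g p = g • p := rfl

lemma mk_eq_iff (v w : Fin 2 → ℝ) (hv : v ≠ 0) (hw : w ≠ 0) :
    Projectivization.mk ℝ v hv = Projectivization.mk ℝ w hw ↔ v 0 * w 1 = v 1 * w 0 := by
  rw [Projectivization.mk_eq_mk_iff']
  constructor
  · rintro ⟨a, rfl⟩
    simp; ring
  · intro h
    by_cases h0 : w 0 = 0
    · have h1 : w 1 ≠ 0 := by
        intro h1; apply hw; ext i; match i with
        | 0 => exact h0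
        | 1 => exact h1
      refine ⟨v 1 / w 1, ?_⟩
      rw [h0, mul_zero] at h
      have hv0 : v 0 = 0 := (mul_eq_zero.1 h).resolve_right h1
      ext i
      match i with
      | 0 => simp [h0, hv0]
      | 1 => simp; field_simp
    · refine ⟨v 0 / w 0, ?_⟩
      ext i
      match i with
      | 0 => simp; field_simp
      | 1 => simp; field_simp; linarith

lemma bd_fix_iff (k : SL2R) (v : Fin 2 → ℝ) (hv : v ≠ 0) :
    boundaryAct k (Projectivization.mk ℝ v hv) = Projectivization.mk ℝ v hv ↔
      KF k (v 0) (v 1) = 0 := by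
  obtain ⟨hv', e⟩ := bd_mk k v hv
  rw [e]
  refine (mk_eq_iff _ _ _ _).trans ?_
  simp only [KF, Matrix.cons_val_zero, Matrix.cons_val_one]
  constructor <;> intro h <;> linarith

lemma fix_finite (k : SL2R) (h1 : k ≠ 1) (h2 : k ≠ -1) :
    {p : Projectivization ℝ (Fin 2 → ℝ) | boundaryAct k p = p}.Finite := by
  have ne1 : ∀ r : ℝ, (![r, 1] : Fin 2 → ℝ) ≠ 0 := by
    intro r h; have := congrFun h 1; simp at this
  have ne2 : (![1, 0] : Fin 2 → ℝ) ≠ 0 := by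
    intro h; have := congrFun h 0; simp at this
  have hfin : {r : ℝ | KF k r 1 = 0}.Finite := by
    by_cases ha : k 1 0 = 0
    · by_cases hb : k 1 1 - k 0 0 = 0
      · refine Set.Finite.subset (Set.finite_empty) ?_
        intro r hr
        exfalso
        simp only [KF, Set.mem_ofPred_eq, ha, hb] at hr
        have hc : k 0 1 = 0 := by linarith
        have hd := sl_det k
        rw [ha, hc] at hd
        have hdd : k 1 1 = k 0 0 := by linarith
        rw [hdd] at hd
        have : (k 0 0 - 1) * (k 0 0 + 1) = 0 := by linarith
        rcases mul_eq_zero.1 this with h | h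
        · apply h1
          apply sl_ext
          · rw [sl_one00]; linarith
          · rw [sl_one01, hc]
          · rw [sl_one10, ha]
          · rw [sl_one11]; linarith
        · apply h2
          apply sl_ext
          · rw [sl_neg, sl_one00]; linarith
          · rw [sl_neg, sl_one01, hc, neg_zero]
          · rw [sl_neg, sl_one10, ha, neg_zero]
          · rw [sl_neg, sl_one11]; linarith
      · refine Set.Finite.subset (Set.finite_singleton (k 0 1 / (k 1 1 - k 0 0))) ?_
        intro r hr
        simp only [KF, Set.mem_ofPred_eq, ha] at hr
        rw [Set.mem_singleton_iff, eq_div_iff hb]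
        linarith
    · set s := Real.sqrt ((k 1 1 - k 0 0) ^ 2 + 4 * k 1 0 * k 0 1) with hs
      refine Set.Finite.subset (Set.toFinite {(-(k 1 1 - k 0 0) + s) / (2 * k 1 0),
        (-(k 1 1 - k 0 0) - s) / (2 * k 1 0)}) ?_
      intro r hr
      simp only [KF, Set.mem_ofPred_eq] at hr
      have e : (2 * k 1 0 * r + (k 1 1 - k 0 0)) ^ 2 =
          (k 1 1 - k 0 0) ^ 2 + 4 * k 1 0 * k 0 1 := by
        linear_combination (4 * k 1 0) * hr
      rw [← e, Real.sqrt_sq_eq_abs] at hs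
      rcases abs_cases (2 * k 1 0 * r + (k 1 1 - k 0 0)) with h | h
      · left
        rw [eq_div_iff (by simpa using ha)]; linarith
      · right
        rw [Set.mem_singleton_iff, eq_div_iff (by simpa using ha)]; linarith
  refine Set.Finite.subset ((hfin.image (fun r => Projectivization.mk ℝ ![r, 1] (ne1 r))).union
    (Set.finite_singleton (Projectivization.mk ℝ ![1, 0] ne2))) ?_
  intro p hp
  induction p using Projectivization.ind with
  | h v hv =>
  by_cases h0 : v 1 = 0
  · right
    rw [Set.mem_singleton_iff, mk_eq_iff]
    simp [h0]
  · left
    have e : Projectivization.mk ℝ v hv = Projectivization.mk ℝ ![v 0 / v 1, 1] (ne1 _) := by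
      rw [mk_eq_iff]
      simp; field_simp
    rw [Set.mem_ofPred_eq, e] at hp
    exact ⟨v 0 / v 1, (bd_fix_iff k _ _).1 hp, e.symm⟩

/-- Non-elementary groups accumulating at `1` contain elliptics near `1`. -/
lemma elliptic_near (Γ : Subgroup SL2R)
    (hB : ∀ p : Boundary, ¬ {q : Boundary | ∃ g : SL2R, g ∈ Γ ∧ boundaryAct g p = q}.Finite)
    (hN : ∀ ε > 0, ∃ g ∈ Γ, g ≠ 1 ∧ g ≠ -1 ∧ ∀ i j, |g i j - (1 : SL2R) i j| < ε)
    (ε : ℝ) (hε : 0 < ε) : ∃ g ∈ Γ, |tr2 g| < 2 ∧ ∀ i j, |g i j - (1 : SL2R) i j| < ε := by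
  by_contra hcon
  push Not at hcon
  have hne : ∀ g ∈ Γ, (∀ i j, |g i j - (1 : SL2R) i j| < ε) → 2 ≤ |tr2 g| := by
    intro g hg hn
    by_contra hlt
    push Not at hlt
    obtain ⟨i, j, hij⟩ := hcon g hg hlt
    exact absurd (hn i j) (not_lt.2 hij)
  choose g hgΓ hg1 hg2 hgn using fun n : ℕ => hN (1 / ((n : ℝ) + 1)) (by positivity)
  have hgt : ETends Filter.atTop g 1 := by
    intro i j
    rw [tendsto_iff_norm_sub_tendsto_zero]
    exact squeeze_zero (fun _ => norm_nonneg _) (fun n => (hgn n i j).le)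
      tendsto_one_div_add_atTop_nhds_zero_nat
  obtain ⟨v, hv, hD⟩ := limit_dir Γ g hgΓ (fun n => ⟨hg1 n, hg2 n⟩) hgt ε hε hne
  have hq : 0 ≤ (v 0) ^ 2 + v 1 * v 2 := by
    have := hD 1 Γ.one_mem
    linarith
  obtain ⟨v1, v2, hv1, hv2, c, hc⟩ := KF_factor (v 0) (v 1) (v 2) hq (by
    rintro ⟨a, b, c⟩
    apply hv
    ext i
    match i with
    | 0 => exact a
    | 1 => exact b
    | 2 => exact c)
  obtain ⟨k, hkΓ, hk1, hk2, hkn⟩ := hN ε hε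
  have hkt := hne k hkΓ hkn
  let p : Bool → Projectivization ℝ (Fin 2 → ℝ) := fun b =>
    if b then Projectivization.mk ℝ v1 hv1 else Projectivization.mk ℝ v2 hv2
  have hfix : ∀ k ∈ Γ, 2 ≤ |tr2 k| → ∃ b, k • p b = p b := by
    intro k hk ht
    have h0 := DD_zero Γ _ _ _ _ hD k hk ht
    have := hc k
    rw [h0, mul_zero] at this
    rcases mul_eq_zero.1 this with h | h
    · exact ⟨true, (bd_fix_iff k v1 hv1).2 h⟩
    · exact ⟨false, (bd_fix_iff k v2 hv2).2 h⟩
  obtain ⟨b, hb⟩ := neumann_orbit (G := Γ) p _ (fix_finite k hk1 hk2) (by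
    intro h
    obtain ⟨b, hb⟩ := hfix ((h : SL2R)⁻¹ * k * h)
      (Γ.mul_mem (Γ.mul_mem (Γ.inv_mem h.2) hkΓ) h.2) (by
        have := tr2_conj (h : SL2R)⁻¹ k
        rw [inv_inv] at this
        rw [this]; exact hkt)
    refine ⟨b, ?_⟩
    rw [Set.mem_ofPred_eq, bd_smul]
    rw [mul_smul, mul_smul, inv_smul_eq_iff] at hb
    exact hb)
  refine hB (p b) (hb.subset ?_)
  rintro q ⟨g, hg, rfl⟩
  exact ⟨⟨g, hg⟩, rfl⟩


lemma exists_noncomm (Γ : Subgroup SL2R)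
    (hH : ∀ z : UpperHalfPlane, ¬ {w : UpperHalfPlane | ∃ g : SL2R, g ∈ Γ ∧ g • z = w}.Finite)
    (E : SL2R) (hE : |tr2 E| < 2) : ∃ h ∈ Γ, h * E ≠ E * h := by
  by_contra hcon
  push Not at hcon
  obtain ⟨θ, hs, k, hk, -⟩ := ell_cases E hE
  apply hH (k • UpperHalfPlane.I)
  refine (Set.finite_singleton (k • UpperHalfPlane.I)).subset ?_
  rintro w ⟨g, hg, rfl⟩
  have h1 := (hk g).1 (hcon g hg)
  obtain ⟨a, b⟩ := comm_rot hs.ne' _ h1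
  have hd := sl_det (k⁻¹ * g * k)
  have h2 : (k⁻¹ * g * k) • UpperHalfPlane.I = UpperHalfPlane.I := by
    ext
    rw [UpperHalfPlane.coe_specialLinearGroup_apply]
    generalize hM : k⁻¹ * g * k = M at *
    rw [a, b]
    have hne : ((algebraMap ℝ ℝ (-M 0 1) : ℝ) : ℂ) * (UpperHalfPlane.I : ℂ)
        + ((algebraMap ℝ ℝ (M 0 0) : ℝ) : ℂ) ≠ 0 := by
      intro h0
      have h1 := congrArg Complex.re h0
      have h2 := congrArg Complex.im h0
      simp at h1 h2
      rw [a, h1, h2] at hd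
      simp at hd
    rw [div_eq_iff hne]
    apply Complex.ext <;> simp
  rw [mul_smul, mul_smul, inv_smul_eq_iff] at h2
  exact h2

lemma exists_infinite (Γ : Subgroup SL2R)
    (hH : ∀ z : UpperHalfPlane, ¬ {w : UpperHalfPlane | ∃ g : SL2R, g ∈ Γ ∧ g • z = w}.Finite)
    (hB : ∀ p : Boundary, ¬ {q : Boundary | ∃ g : SL2R, g ∈ Γ ∧ boundaryAct g p = q}.Finite)
    (hN : ∀ ε > 0, ∃ g ∈ Γ, g ≠ 1 ∧ g ≠ -1 ∧ ∀ i j, |g i j - (1 : SL2R) i j| < ε) :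
    ∃ E ∈ Γ, |tr2 E| < 2 ∧ ∀ n > 0, E ^ n ≠ 1 := by
  by_contra hcon
  push Not at hcon
  have hfin : ∀ g ∈ Γ, |tr2 g| < 2 → ∃ n > 0, lucasTr (tr2 g) n = 2 := by
    intro g hg ht
    obtain ⟨n, hn, e⟩ := hcon g hg ht
    exact ⟨n, hn, by rw [lucasTr_tr, e, tr2_one]⟩
  choose A hAΓ hAt hAn using fun n : ℕ =>
    elliptic_near Γ hB hN (1 / ((n : ℝ) + 1)) (by positivity)
  have hA : ETends Filter.atTop A 1 := by
    intro i j
    rw [tendsto_iff_norm_sub_tendsto_zero]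
    exact squeeze_zero (fun _ => norm_nonneg _) (fun n => (hAn n i j).le)
      tendsto_one_div_add_atTop_nhds_zero_nat
  obtain ⟨h, hhΓ, hh⟩ := exists_noncomm Γ hH (A 0) (hAt 0)
  set E := A 0 with hE
  have ev : ∀ c : SL2R, ∀ᶠ n in Filter.atTop,
      (∀ i j, |(c * A n * c⁻¹) i j - (1 : SL2R) i j| < 1/16) ∧ -2 < tr2 (A n * (c * A n * c⁻¹)) := by
    intro c
    have h1 := (hA.conj c).near (ε := 1/16) (by norm_num)
    have h2 : ETends Filter.atTop (fun n => A n * (c * A n * c⁻¹)) 1 := by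
      simpa using hA.mul (hA.conj c)
    exact h1.and (h2.tr.eventually_const_lt (u := -2) (by rw [tr2_one]; norm_num))
  have ev0 := hA.tr.eventually_const_lt (u := 0) (by rw [tr2_one]; norm_num)
  obtain ⟨n, n1, n2, n3, n4⟩ := ((hA.near (ε := 1/16) (by norm_num)).and
    (ev0.and ((ev E).and (ev h)))).exists
  by_cases c1 : E * A n = A n * E
  · by_cases c2 : h * A n = A n * h
    · exact hh (ell_centralizer (A n) (hAt n) h E c2 c1)
    · exact main_contra Γ hfin (A n) h (hAΓ n) hhΓ (hAt n) n2 c2 n1 n4.1 n4.2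
  · exact main_contra Γ hfin (A n) E (hAΓ n) (hAΓ 0) (hAt n) n2 c1 n1 n3.1 n3.2

lemma center_iff (g : SL2R) : g ∈ Subgroup.center SL2R ↔ g = 1 ∨ g = -1 := by
  rw [Matrix.SpecialLinearGroup.mem_center_iff]
  constructor
  · rintro ⟨r, hr, e⟩
    have e' : ∀ i j, g i j = (Matrix.scalar (Fin 2) r) i j := fun i j => by rw [e]
    have h00 : g 0 0 = r := by rw [e']; simp
    have h01 : g 0 1 = 0 := by rw [e']; simp
    have h10 : g 1 0 = 0 := by rw [e']; simp
    have h11 : g 1 1 = r := by rw [e']; simp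
    simp only [Fintype.card_fin] at hr
    rcases sq_eq_one_iff.1 hr with rfl | rfl
    · left
      exact sl_ext h00 h01 h10 h11
    · right
      apply sl_ext <;> rw [sl_neg]
      · rw [h00, sl_one00]
      · rw [h01, sl_one01, neg_zero]
      · rw [h10, sl_one10, neg_zero]
      · rw [h11, sl_one11]
  · rintro (rfl | rfl)
    · exact ⟨1, by simp, by simp⟩
    · refine ⟨-1, by simp, ?_⟩
      ext i j
      rw [Matrix.SpecialLinearGroup.coe_neg]
      fin_cases i <;> fin_cases j <;> simp

lemma mk_eq_one_iff (g : SL2R) : (QuotientGroup.mk g : PSL2R) = 1 ↔ g = 1 ∨ g = -1 := by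
  rw [QuotientGroup.eq_one_iff, center_iff]

lemma psl_mk_neg (g : SL2R) : (QuotientGroup.mk (-g) : PSL2R) = QuotientGroup.mk g := by
  rw [QuotientGroup.eq, center_iff]
  right
  rw [inv_mul_eq_iff_eq_mul]
  simp

lemma absTrace_mk (g : SL2R) : absTrace (QuotientGroup.mk g : PSL2R) = |tr2 g| := by
  unfold absTrace
  have h := QuotientGroup.out_eq' (QuotientGroup.mk g : PSL2R)
  have h1 : (QuotientGroup.mk (Quotient.out (QuotientGroup.mk g : PSL2R)) : PSL2R)
    = QuotientGroup.mk g := h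
  generalize (Quotient.out (QuotientGroup.mk g : PSL2R)) = x at *
  rw [QuotientGroup.eq, center_iff] at h1
  have e : Matrix.trace ((x : SL2R) : Matrix (Fin 2) (Fin 2) ℝ) = tr2 x := by
    rw [Matrix.trace_fin_two]; rfl
  rw [e]
  rcases h1 with h1 | h1
  · rw [inv_mul_eq_iff_eq_mul, mul_one] at h1
    rw [h1]
  · rw [inv_mul_eq_iff_eq_mul, mul_neg, mul_one] at h1
    rw [h1, tr2_neg, abs_neg]

lemma rot_pow (θ : ℝ) (n : ℕ) : rotMat θ ^ n = rotMat (n * θ) := by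
  induction n with
  | zero =>
    apply sl_ext <;> simp [rot00, rot01, rot10, rot11]
  | succ n ih =>
    rw [pow_succ, ih]
    have e : ((n + 1 : ℕ) : ℝ) * θ = n * θ + θ := by push_cast; ring
    rw [e]
    apply sl_ext <;> simp only [sl_mul, rot00, rot01, rot10, rot11, cos_add, sin_add] <;> ring

lemma sl_topgroup : IsTopologicalGroup SL2R :=
  @Matrix.SpecialLinearGroup.topologicalGroup (Fin 2) ℝ _ _ _ _ _

lemma near_of_nondisc (G : Subgroup PSL2R) (hG : ¬ IsDiscreteSubgroup G) (ε : ℝ) (hε : 0 < ε) :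
    ∃ g : SL2R, (QuotientGroup.mk g : PSL2R) ∈ G ∧ g ≠ 1 ∧ g ≠ -1 ∧
      ∀ i j, |g i j - (1 : SL2R) i j| < ε := by
  by_contra hcon
  push Not at hcon
  apply hG
  unfold IsDiscreteSubgroup
  have := sl_topgroup
  let U : Set SL2R := {g | ∀ i j, |g i j - (1 : SL2R) i j| < ε}
  have hU : IsOpen U := by
    have : U = ⋂ i, ⋂ j, {g : SL2R | |g i j - (1 : SL2R) i j| < ε} := by
      ext g; simp [U]
    rw [this]
    refine isOpen_iInter_of_finite fun i => isOpen_iInter_of_finite fun j => ?_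
    apply isOpen_lt _ continuous_const
    have : Continuous (fun g : SL2R => (g : Matrix (Fin 2) (Fin 2) ℝ)) := continuous_induced_dom
    have h2 : Continuous (fun g : SL2R => g i j) := this.matrix_elem i j
    exact (h2.sub continuous_const).abs
  have hop : IsOpen ((QuotientGroup.mk : SL2R → PSL2R) '' U) := QuotientGroup.isOpenMap_coe _ hU
  apply discreteTopology_of_isOpen_singleton_one
  refine ⟨_, hop, ?_⟩
  ext x
  constructor
  · rintro ⟨g, hg, e⟩
    rw [Set.mem_singleton_iff]
    apply Subtype.ext
    change (x : PSL2R) = 1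
    rw [← e, mk_eq_one_iff]
    by_contra hne
    push Not at hne
    obtain ⟨i, j, hij⟩ := hcon g (by rw [e]; exact x.2) hne.1 hne.2
    exact absurd (hg i j) (not_lt.2 hij)
  · rintro rfl
    refine ⟨1, ?_, rfl⟩
    intro i j
    simpa using hε

/-- Every non-elementary, non-discrete subgroup of `PSL(2,ℝ)` contains an elliptic element of
infinite order; moreover such an element is conjugate in `PSL(2,ℝ)` to the class of a rotation
matrix `R(θ)` with `θ ∈ (0,π)` and `θ/π` irrational. -/
theorem exists_elliptic_infinite_order (G : Subgroup PSL2R)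
    (h_nonelem : ¬ IsElementary G) (h_nondisc : ¬ IsDiscreteSubgroup G) :
    ∃ A ∈ G, IsElliptic A ∧ ¬ IsOfFinOrder A ∧
      ∃ θ ∈ Set.Ioo (0:ℝ) Real.pi, Irrational (θ / Real.pi) ∧
        IsConj (QuotientGroup.mk (rotMat θ) : PSL2R) A := by
  unfold IsElementary at h_nonelem
  push Not at h_nonelem
  obtain ⟨hH, hB⟩ := h_nonelem
  let Γ : Subgroup SL2R := G.comap (QuotientGroup.mk' (Subgroup.center SL2R))
  obtain ⟨E, hEΓ, hEt, hEn⟩ := exists_infinite Γ (fun z => hH z) (fun p => hB p)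
    (fun ε hε => by
      obtain ⟨g, h1, h2⟩ := near_of_nondisc G h_nondisc ε hε
      exact ⟨g, h1, h2⟩)
  have hno : ∀ n > 0, (QuotientGroup.mk E : PSL2R) ^ n ≠ 1 := by
    intro n hn h
    rw [← QuotientGroup.mk_pow, mk_eq_one_iff] at h
    apply hEn (n * 2) (by omega)
    rw [pow_mul]
    rcases h with h | h <;> rw [h] <;> simp
  have hnf : ¬ IsOfFinOrder (QuotientGroup.mk E : PSL2R) := by
    rw [isOfFinOrder_iff_pow_eq_one]
    rintro ⟨n, hn, h⟩
    exact hno n hn h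
  refine ⟨QuotientGroup.mk E, hEΓ, ?_, hnf, ?_⟩
  · unfold _root_.IsElliptic
    rw [absTrace_mk]; exact hEt
  obtain ⟨θ, hθ, k, hk⟩ := conj_rot E hEt
  have hmk : (QuotientGroup.mk E : PSL2R) = QuotientGroup.mk (k * rotMat θ * k⁻¹) := by
    rcases hk with hk | hk
    · rw [hk]
    · rw [hk, psl_mk_neg]
  have hc : IsConj (QuotientGroup.mk (rotMat θ) : PSL2R) (QuotientGroup.mk E) := by
    rw [isConj_iff]
    exact ⟨QuotientGroup.mk k, hmk.symm⟩
  refine ⟨θ, hθ, ?_, hc⟩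
  rintro ⟨r, hr⟩
  have hπ := Real.pi_pos
  apply hno (r.den * 2) (by have := r.den_pos; omega)
  have h1 : rotMat θ ^ (r.den * 2) = 1 := by
    rw [rot_pow]
    have e : ((r.den * 2 : ℕ) : ℝ) * θ = (r.num : ℝ) * (2 * π) := by
      have h2 : θ = r * π := by field_simp at hr; linarith
      have h3 : (r : ℝ) * r.den = r.num := by exact_mod_cast Rat.mul_den_eq_num r
      rw [h2]; push_cast
      linear_combination (2 * π) * h3
    have hsin : Real.sin ((r.num : ℝ) * (2 * π)) = 0 := by
      have := Real.sin_int_mul_pi (r.num * 2)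
      push_cast at this
      rwa [mul_assoc] at this
    rw [e]
    apply sl_ext
    · rw [rot00, Real.cos_int_mul_two_pi, sl_one00]
    · rw [rot01, hsin, sl_one01]
    · rw [rot10, hsin, sl_one10, neg_zero]
    · rw [rot11, Real.cos_int_mul_two_pi, sl_one11]
  have h2 : (QuotientGroup.mk (rotMat θ) : PSL2R) ^ (r.den * 2) = 1 := by
    rw [← QuotientGroup.mk_pow, h1]; rfl
  obtain ⟨c, hcc⟩ := isConj_iff.1 hc
  rw [← hcc, conj_pow, h2]; simp
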